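/- arXiv:0911.4941 — 3 statements merged into one kernel-verified Lean document; each statement's English description precedes it below -/
import Mathlib

section
/- Let p be a prime, n ≥ 1, λ a weighting, and g ∈ 𝔽_p[x₁,…,xₙ] a nonzero polynomial. Then either Tr(init_λ(g)) = 0, or Tr(g) ≠ 0 and Tr(init_λ(g)) = init_λ(Tr(g)). -/
open MvPolynomial

/-- The near-splitting `Tr` on `𝔽_p[x₁,…,xₙ]`: on a monomial `∏ xᵢ^{eᵢ}` it gives
`∏ xᵢ^{(eᵢ+1)/p - 1}` if `p ∣ eᵢ + 1` for all `i`, and `0` otherwise, extended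
`𝔽_p`-linearly (note that `c^{1/p} = c` for `c ∈ 𝔽_p`). -/
noncomputable def Tr (p n : ℕ) (g : MvPolynomial (Fin n) (ZMod p)) :
    MvPolynomial (Fin n) (ZMod p) :=
  ∑ m ∈ g.support,
    if ∀ i, p ∣ (m i + 1) then
      monomial (Finsupp.equivFunOnFinite.symm fun i => (m i + 1) / p - 1) (g.coeff m)
    else 0

/-- A Frobenius splitting is an additive map `φ` with `φ (a^p * b) = a * φ b` and `φ 1 = 1`. -/
def IsFrobeniusSplitting (p : ℕ) {R : Type*} [CommRing R] (φ : R → R) : Prop :=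
  (∀ a b : R, φ (a + b) = φ a + φ b) ∧ (∀ a b : R, φ (a ^ p * b) = a * φ b) ∧ φ 1 = 1

/-- The `λ`-weight of an exponent vector `m` is `∑ᵢ λᵢ·mᵢ`. -/
def wtOf {n : ℕ} (lam : Fin n → ℕ) (m : Fin n →₀ ℕ) : ℕ := ∑ i, lam i * m i

/-- The leading form `init_λ(g)`: the sum of the terms of `g` of maximal `λ`-weight. -/
noncomputable def initForm {R : Type*} [CommRing R] {n : ℕ} (lam : Fin n → ℕ)
    (g : MvPolynomial (Fin n) R) : MvPolynomial (Fin n) R :=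
  ∑ m ∈ g.support.filter (fun m => ∀ m' ∈ g.support, wtOf lam m' ≤ wtOf lam m),
    MvPolynomial.monomial m (g.coeff m)

/-- The initial ideal `init_λ(I)`, spanned by the leading forms of the nonzero
elements of `I`. -/
noncomputable def initIdeal {R : Type*} [CommRing R] {n : ℕ} (lam : Fin n → ℕ)
    (I : Ideal (MvPolynomial (Fin n) R)) : Ideal (MvPolynomial (Fin n) R) :=
  Ideal.span {h | ∃ g ∈ I, g ≠ 0 ∧ initForm lam g = h}

/-- the exponent vector sent to `u` by `Tr`. -/
noncomputable def upExp (p n : ℕ) (u : Fin n →₀ ℕ) : Fin n →₀ ℕ :=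
  Finsupp.equivFunOnFinite.symm fun i => p * (u i + 1) - 1

theorem upExp_add_one {p : ℕ} (hp : p.Prime) {n : ℕ} (u : Fin n →₀ ℕ) (i : Fin n) :
    upExp p n u i + 1 = p * (u i + 1) := by
  have : 0 < p * (u i + 1) := Nat.mul_pos hp.pos (Nat.succ_pos _)
  simp only [upExp, Finsupp.equivFunOnFinite_symm_apply_apply]
  omega

theorem down_iff {p : ℕ} (hp : p.Prime) {n : ℕ} (u m : Fin n →₀ ℕ) :
    ((∀ i, p ∣ (m i + 1)) ∧
      (Finsupp.equivFunOnFinite.symm fun i => (m i + 1) / p - 1) = u) ↔ m = upExp p n u := by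
  constructor
  · rintro ⟨h, rfl⟩
    ext i
    apply Nat.succ_injective
    simp only [Nat.succ_eq_add_one]
    rw [upExp_add_one hp]
    obtain ⟨c, hc⟩ := h i
    have hc0 : c ≠ 0 := by rintro rfl; omega
    simp only [Finsupp.equivFunOnFinite_symm_apply_apply]
    rw [hc, Nat.mul_div_cancel_left _ hp.pos, Nat.sub_add_cancel (by omega)]
  · rintro rfl
    refine ⟨fun i => ⟨u i + 1, upExp_add_one hp u i⟩, ?_⟩
    ext i
    simp only [Finsupp.equivFunOnFinite_symm_apply_apply]
    rw [upExp_add_one hp, Nat.mul_div_cancel_left _ hp.pos, Nat.add_sub_cancel]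

theorem coeff_Tr {p : ℕ} (hp : p.Prime) {n : ℕ} (g : MvPolynomial (Fin n) (ZMod p))
    (u : Fin n →₀ ℕ) : (Tr p n g).coeff u = g.coeff (upExp p n u) := by
  classical
  unfold Tr
  rw [coeff_sum]
  have : ∀ m ∈ g.support, coeff u (if ∀ i, p ∣ (m i + 1) then
      monomial (Finsupp.equivFunOnFinite.symm fun i => (m i + 1) / p - 1) (g.coeff m)
    else 0) = if m = upExp p n u then g.coeff m else 0 := by
    intro m _
    have h := down_iff hp u m
    split_ifs with h1 h2 h2
    · rw [coeff_monomial, if_pos (h.2 h2).2]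
    · rw [coeff_monomial, if_neg fun h3 => h2 (h.1 ⟨h1, h3⟩)]
    · exact absurd (h.2 h2).1 h1
    · simp
  rw [Finset.sum_congr rfl this, Finset.sum_ite_eq']
  split_ifs with h
  · rfl
  · exact (notMem_support_iff.1 h).symm

open Classical in
theorem coeff_initForm {R : Type*} [CommRing R] {n : ℕ} (lam : Fin n → ℕ)
    (g : MvPolynomial (Fin n) R) (m : Fin n →₀ ℕ) :
    (initForm lam g).coeff m =
      if ∀ m' ∈ g.support, wtOf lam m' ≤ wtOf lam m then g.coeff m else 0 := by
  unfold initForm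
  rw [coeff_sum]
  simp only [coeff_monomial]
  rw [Finset.sum_ite_eq']
  simp only [Finset.mem_filter]
  split_ifs with h1 h2 h2
  · rfl
  · exact absurd h1.2 h2
  · by_contra h3
    exact h1 ⟨mem_support_iff.2 (Ne.symm h3), h2⟩
  · rfl

theorem wtOf_upExp {p : ℕ} (hp : p.Prime) {n : ℕ} (lam : Fin n → ℕ) (u : Fin n →₀ ℕ) :
    wtOf lam (upExp p n u) + ∑ i, lam i = p * (wtOf lam u + ∑ i, lam i) := by
  unfold wtOf
  rw [← Finset.sum_add_distrib, ← Finset.sum_add_distrib, Finset.mul_sum]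
  refine Finset.sum_congr rfl fun i _ => ?_
  have := upExp_add_one hp u i
  calc _ = lam i * (upExp p n u i + 1) := by ring
    _ = _ := by rw [this]; ring

theorem wtOf_upExp_le {p : ℕ} (hp : p.Prime) {n : ℕ} (lam : Fin n → ℕ) (u v : Fin n →₀ ℕ) :
    wtOf lam (upExp p n u) ≤ wtOf lam (upExp p n v) ↔ wtOf lam u ≤ wtOf lam v := by
  rw [← Nat.add_le_add_iff_right (n := ∑ i, lam i), wtOf_upExp hp, wtOf_upExp hp,
    Nat.mul_le_mul_left_iff hp.pos, Nat.add_le_add_iff_right]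

/-- for any weighting `λ` and nonzero `g`, either `Tr(init_λ(g)) = 0`, or
`Tr(g) ≠ 0` and `Tr(init_λ(g)) = init_λ(Tr(g))`. -/
theorem stmt_13 {p : ℕ} (hp : p.Prime) {n : ℕ} (hn : 1 ≤ n) (lam : Fin n → ℕ)
    (g : MvPolynomial (Fin n) (ZMod p)) (hg : g ≠ 0) :
    Tr p n (initForm lam g) = 0 ∨
      (Tr p n g ≠ 0 ∧ Tr p n (initForm lam g) = initForm lam (Tr p n g)) := by
  classical
  by_cases h0 : Tr p n (initForm lam g) = 0
  · exact Or.inl h0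
  right
  obtain ⟨u, hu⟩ := ne_zero_iff.1 h0
  rw [coeff_Tr hp, coeff_initForm] at hu
  have hmax : ∀ m' ∈ g.support, wtOf lam m' ≤ wtOf lam (upExp p n u) := by
    by_contra h
    exact hu (if_neg h)
  rw [if_pos hmax] at hu
  refine ⟨ne_zero_iff.2 ⟨u, by rwa [coeff_Tr hp]⟩, ?_⟩
  ext v
  rw [coeff_Tr hp, coeff_initForm, coeff_initForm, coeff_Tr hp]
  refine if_congr ⟨fun h m' hm' => ?_, fun h m' hm' => ?_⟩ rfl rfl
  · rw [mem_support_iff, coeff_Tr hp] at hm'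
    exact (wtOf_upExp_le hp lam _ _).1 (h _ (mem_support_iff.2 hm'))
  · refine (hmax m' hm').trans ((wtOf_upExp_le hp lam _ _).2 (h u ?_))
    rwa [mem_support_iff, coeff_Tr hp]
end

section
/- Let p be a prime, n ≥ 1, and f ∈ 𝔽_p[x₁,…,xₙ] a polynomial of total degree at most n. Let λ be a weighting such that x₁⋯xₙ appears in init_λ(f), and assume Tr(f^{p−1}) = 1 (equivalently, Tr((init_λ f)^{p−1}) = 1), so that g ↦ Tr(f^{p−1}·g) and g ↦ Tr((init_λ f)^{p−1}·g) are both Frobenius splittings of 𝔽_p[x₁,…,xₙ]. If an ideal I is compatibly split by g ↦ Tr(f^{p−1}·g), then the initial ideal init_λ(I) is compatibly split by g ↦ Tr((init_λ f)^{p−1}·g). -/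
open MvPolynomial

/-- The exponent vector `p(k+1)-1`. -/
noncomputable def lift14 (p n : ℕ) (k : Fin n →₀ ℕ) : Fin n →₀ ℕ :=
  Finsupp.equivFunOnFinite.symm fun i => p * (k i + 1) - 1

theorem coeff_Tr14 {p n : ℕ} (hp : 0 < p) (g : MvPolynomial (Fin n) (ZMod p)) (k : Fin n →₀ ℕ) :
    coeff k (Tr p n g) = coeff (lift14 p n k) g := by
  classical
  unfold Tr
  rw [coeff_sum]
  have hpos : ∀ i, 0 < p * (k i + 1) := fun i => Nat.mul_pos hp (Nat.succ_pos _)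
  rw [Finset.sum_eq_single (lift14 p n k)]
  · have h1 : ∀ i, (lift14 p n k) i + 1 = p * (k i + 1) := by
      intro i
      have := hpos i
      simp only [lift14, Finsupp.equivFunOnFinite_symm_apply_apply]
      omega
    rw [if_pos (fun i => by rw [h1 i]; exact dvd_mul_right _ _), coeff_monomial, if_pos]
    ext i
    simp only [Finsupp.equivFunOnFinite_symm_apply_apply]
    rw [h1 i, Nat.mul_div_cancel_left _ hp]
    rfl
  · intro m _ hne
    split_ifs with hd
    · rw [coeff_monomial, if_neg]
      intro he
      apply hne
      ext i
      have hi := DFunLike.congr_fun he i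
      simp only [Finsupp.equivFunOnFinite_symm_apply_apply] at hi
      obtain ⟨q, hq⟩ := hd i
      rw [hq, Nat.mul_div_cancel_left _ hp] at hi
      have hq0 : q ≠ 0 := by rintro rfl; simp at hq
      have : q = k i + 1 := by omega
      subst this
      simp only [lift14, Finsupp.equivFunOnFinite_symm_apply_apply]
      omega
    · simp
  · intro h
    rw [notMem_support_iff.mp h]
    simp

theorem wt_add14 {n : ℕ} (lam : Fin n → ℕ) (a b : Fin n →₀ ℕ) :
    wtOf lam (a + b) = wtOf lam a + wtOf lam b := by
  simp [wtOf, mul_add, Finset.sum_add_distrib]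

theorem wt_lift14 {p n : ℕ} (hp : 0 < p) (lam : Fin n → ℕ) (k : Fin n →₀ ℕ) :
    wtOf lam (lift14 p n k) = (p - 1) * wtOf lam (Finsupp.equivFunOnFinite.symm fun _ : Fin n => 1)
      + p * wtOf lam k := by
  simp only [wtOf, lift14, Finsupp.equivFunOnFinite_symm_apply_apply, Finset.mul_sum,
    ← Finset.sum_add_distrib]
  refine Finset.sum_congr rfl fun i _ => ?_
  obtain ⟨q, rfl⟩ : ∃ q, p = q + 1 := ⟨p - 1, by omega⟩
  have : (q + 1) * (k i + 1) - 1 = q + (q + 1) * k i := by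
    rw [mul_add]; omega
  rw [this, Nat.add_sub_cancel]
  ring

/-- `h` is the weight `d` part of `g`, and `g` has no terms of weight above `d`. -/
def Top14 {R : Type*} [CommRing R] {n : ℕ} (lam : Fin n → ℕ) (d : ℕ)
    (g h : MvPolynomial (Fin n) R) : Prop :=
  (∀ m, coeff m h ≠ 0 → wtOf lam m = d) ∧ (∀ m, coeff m (g - h) ≠ 0 → wtOf lam m < d)

theorem Top14.le {R : Type*} [CommRing R] {n : ℕ} {lam : Fin n → ℕ} {d : ℕ}
    {g h : MvPolynomial (Fin n) R} (H : Top14 lam d g h) (m) (hm : coeff m g ≠ 0) :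
    wtOf lam m ≤ d := by
  by_cases h0 : coeff m h = 0
  · exact (H.2 m (by simpa [h0] using hm)).le
  · exact (H.1 m h0).le

theorem exists_mul14 {R : Type*} [CommRing R] {n : ℕ} {a b : MvPolynomial (Fin n) R} {m}
    (hm : coeff m (a * b) ≠ 0) : ∃ u v, coeff u a ≠ 0 ∧ coeff v b ≠ 0 ∧ u + v = m := by
  classical
  have := support_mul a b (mem_support_iff.mpr hm)
  obtain ⟨u, hu, v, hv, e⟩ := Finset.mem_add.mp this
  exact ⟨u, v, mem_support_iff.mp hu, mem_support_iff.mp hv, e⟩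

theorem Top14.mul {R : Type*} [CommRing R] {n : ℕ} {lam : Fin n → ℕ} {d d' : ℕ}
    {g h g' h' : MvPolynomial (Fin n) R} (H : Top14 lam d g h) (H' : Top14 lam d' g' h') :
    Top14 lam (d + d') (g * g') (h * h') := by
  constructor
  · intro m hm
    obtain ⟨u, v, hu, hv, rfl⟩ := exists_mul14 hm
    rw [wt_add14, H.1 u hu, H'.1 v hv]
  · intro m hm
    have e : g * g' - h * h' = (g - h) * g' + h * (g' - h') := by ring
    rw [e, coeff_add] at hm
    by_cases h1 : coeff m ((g - h) * g') = 0
    · rw [h1, zero_add] at hm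
      obtain ⟨u, v, hu, hv, rfl⟩ := exists_mul14 hm
      have := H.1 u hu
      have := H'.2 v hv
      rw [wt_add14]; omega
    · obtain ⟨u, v, hu, hv, rfl⟩ := exists_mul14 h1
      have := H.2 u hu
      have := H'.le v hv
      rw [wt_add14]; omega

theorem Top14.monomial {R : Type*} [CommRing R] {n : ℕ} (lam : Fin n → ℕ) (u : Fin n →₀ ℕ) (c : R) :
    Top14 lam (wtOf lam u) (MvPolynomial.monomial u c) (MvPolynomial.monomial u c) := by
  classical
  constructor
  · intro m hm
    rw [coeff_monomial] at hm
    by_cases h : u = m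
    · rw [h]
    · simp [h] at hm
  · intro m hm
    simp at hm

theorem Top14.pow {R : Type*} [CommRing R] {n : ℕ} {lam : Fin n → ℕ} {d : ℕ}
    {g h : MvPolynomial (Fin n) R} (H : Top14 lam d g h) (k : ℕ) :
    Top14 lam (k * d) (g ^ k) (h ^ k) := by
  induction k with
  | zero =>
    have := Top14.monomial lam (0 : Fin n →₀ ℕ) (1 : R)
    simpa [wtOf] using this
  | succ k ih =>
    rw [pow_succ, pow_succ, add_mul, one_mul]
    exact ih.mul H

theorem coeff_leading14 {R : Type*} [CommRing R] {n : ℕ} (lam : Fin n → ℕ)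
    (g : MvPolynomial (Fin n) R) (m) [Decidable (∀ m' ∈ g.support, wtOf lam m' ≤ wtOf lam m)] :
    coeff m (initForm lam g) =
      if ∀ m' ∈ g.support, wtOf lam m' ≤ wtOf lam m then coeff m g else 0 := by
  classical
  unfold initForm
  rw [coeff_sum]
  simp only [coeff_monomial, Finset.sum_ite_eq', Finset.mem_filter]
  by_cases h : coeff m g = 0
  · simp [h]
  · have := mem_support_iff.mpr h
    simp [this]

theorem Top14.leading {R : Type*} [CommRing R] {n : ℕ} {lam : Fin n → ℕ}
    {g : MvPolynomial (Fin n) R} {m₀ : Fin n →₀ ℕ} (h0 : m₀ ∈ g.support)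
    (hmax : ∀ m ∈ g.support, wtOf lam m ≤ wtOf lam m₀) :
    Top14 lam (wtOf lam m₀) g (initForm lam g) := by
  classical
  constructor
  · intro m hm
    rw [coeff_leading14] at hm
    split_ifs at hm with h
    · exact le_antisymm (hmax m (mem_support_iff.mpr hm)) (h _ h0)
    · exact absurd rfl hm
  · intro m hm
    rw [coeff_sub, coeff_leading14] at hm
    split_ifs at hm with h
    · simp at hm
    · by_contra hlt
      exact h fun m' hm' => (hmax m' hm').trans (not_lt.mp hlt)

theorem Top14.eq_leading {R : Type*} [CommRing R] {n : ℕ} {lam : Fin n → ℕ} {d : ℕ}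
    {g h : MvPolynomial (Fin n) R} (H : Top14 lam d g h) (hne : h ≠ 0) :
    g ≠ 0 ∧ initForm lam g = h := by
  classical
  obtain ⟨u, hu⟩ := MvPolynomial.ne_zero_iff.mp hne
  have hud := H.1 u hu
  have hug : coeff u g ≠ 0 := by
    intro h0
    have := H.2 u (by simpa [h0] using hu)
    omega
  refine ⟨MvPolynomial.ne_zero_iff.mpr ⟨u, hug⟩, ?_⟩
  ext m
  rw [coeff_leading14]
  by_cases hm : wtOf lam m < d
  · have h1 : coeff m h = 0 := by
      by_contra h1
      have := H.1 m h1
      omega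
    rw [if_neg, h1]
    intro hh
    have := hh u (mem_support_iff.mpr hug)
    omega
  · have h1 : coeff m g = coeff m h := by
      by_contra h1
      exact hm (H.2 m (by rw [coeff_sub]; exact sub_ne_zero.mpr h1))
    rw [if_pos, h1]
    intro m' hm'
    have := H.le m' (mem_support_iff.mp hm')
    omega

theorem Top14.exists_leading {R : Type*} [CommRing R] {n : ℕ} (lam : Fin n → ℕ)
    {g : MvPolynomial (Fin n) R} (hg : g ≠ 0) : ∃ d, Top14 lam d g (initForm lam g) := by
  obtain ⟨m₀, h0, hmax⟩ := g.support.exists_max_image (wtOf lam) (support_nonempty.mpr hg)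
  exact ⟨_, Top14.leading h0 hmax⟩

theorem Top14.mem {R : Type*} [CommRing R] {n : ℕ} {lam : Fin n → ℕ} {d : ℕ}
    {g h : MvPolynomial (Fin n) R} (H : Top14 lam d g h) {I : Ideal (MvPolynomial (Fin n) R)}
    (hg : g ∈ I) : h ∈ initIdeal lam I := by
  by_cases hne : h = 0
  · rw [hne]; exact zero_mem _
  · exact Ideal.subset_span ⟨g, hg, H.eq_leading hne⟩

theorem Tr_add14 {p n : ℕ} (hp : 0 < p) (a b : MvPolynomial (Fin n) (ZMod p)) :
    Tr p n (a + b) = Tr p n a + Tr p n b := by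
  ext m
  simp [coeff_Tr14 hp]

theorem key14 {p n : ℕ} (hp : 0 < p) {lam : Fin n → ℕ} {d : ℕ}
    {g h : MvPolynomial (Fin n) (ZMod p)}
    (H : Top14 lam ((p - 1) * wtOf lam (Finsupp.equivFunOnFinite.symm fun _ : Fin n => 1) + d) g h)
    {I : Ideal (MvPolynomial (Fin n) (ZMod p))} (hg : Tr p n g ∈ I) :
    Tr p n h ∈ initIdeal lam I := by
  by_cases hd : p ∣ d
  · obtain ⟨w, rfl⟩ := hd
    refine Top14.mem (d := w) (g := Tr p n g) ⟨?_, ?_⟩ hg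
    · intro m hm
      rw [coeff_Tr14 hp] at hm
      have := H.1 _ hm
      rw [wt_lift14 hp] at this
      exact Nat.eq_of_mul_eq_mul_left hp (by omega)
    · intro m hm
      rw [coeff_sub, coeff_Tr14 hp, coeff_Tr14 hp, ← coeff_sub] at hm
      have := H.2 _ hm
      rw [wt_lift14 hp] at this
      exact Nat.lt_of_mul_lt_mul_left (a := p) (by omega)
  · have : Tr p n h = 0 := by
      ext m
      rw [coeff_Tr14 hp, coeff_zero]
      by_contra hm
      have := H.1 _ hm
      rw [wt_lift14 hp] at this
      exact hd ⟨wtOf lam m, by omega⟩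
    rw [this]
    exact zero_mem _

/-- suppose `deg f ≤ n`, `x₁⋯xₙ` appears in `init_λ(f)`, and
`Tr(f^{p−1}) = 1` (so both `g ↦ Tr(f^{p−1}·g)` and `g ↦ Tr((init_λ f)^{p−1}·g)` are
Frobenius splittings). If `I` is compatibly split by `g ↦ Tr(f^{p−1}·g)`, then
`init_λ(I)` is compatibly split by `g ↦ Tr((init_λ f)^{p−1}·g)`. -/
theorem stmt_14 {p : ℕ} (hp : p.Prime) {n : ℕ} (hn : 1 ≤ n) (lam : Fin n → ℕ)
    (f : MvPolynomial (Fin n) (ZMod p)) (hdeg : f.totalDegree ≤ n)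
    (hmem : (Finsupp.equivFunOnFinite.symm fun _ : Fin n => 1) ∈ f.support)
    (hmax : ∀ m ∈ f.support,
      wtOf lam m ≤ wtOf lam (Finsupp.equivFunOnFinite.symm fun _ : Fin n => 1))
    (htr : Tr p n (f ^ (p - 1)) = 1)
    (I : Ideal (MvPolynomial (Fin n) (ZMod p)))
    (hI : ∀ g ∈ I, Tr p n (f ^ (p - 1) * g) ∈ I) :
    ∀ g ∈ initIdeal lam I,
      Tr p n ((initForm lam f) ^ (p - 1) * g) ∈ initIdeal lam I := by
  have hp0 := hp.pos
  have Hf := (Top14.leading hmem hmax).pow (p - 1)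
  have hz : Tr p n 0 = 0 := by simp [Tr]
  -- the statement for `a * g` with `g` a leading form
  have step : ∀ (a x : MvPolynomial (Fin n) (ZMod p)), x ∈ I → x ≠ 0 →
      Tr p n ((initForm lam f) ^ (p - 1) * (a * initForm lam x)) ∈ initIdeal lam I := by
    intro a x hx hx0
    obtain ⟨d, Hx⟩ := Top14.exists_leading lam hx0
    induction a using MvPolynomial.induction_on' with
    | monomial u c =>
      have := (Top14.monomial lam u c).mul Hx
      exact key14 hp0 (Hf.mul this) (hI _ (I.mul_mem_left _ hx))
    | add q r ih1 ih2 =>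
      rw [add_mul, mul_add, Tr_add14 hp0]
      exact add_mem ih1 ih2
  intro g hg
  unfold initIdeal at hg
  induction hg using Submodule.closure_induction with
  | zero => rw [mul_zero, hz]; exact zero_mem _
  | add x y _ _ hx hy => rw [mul_add, Tr_add14 hp0]; exact add_mem hx hy
  | smul_mem r x h =>
    obtain ⟨y, hy, hy0, rfl⟩ := h
    exact step r y hy hy0
end

section
/- Let p be a prime, n ≥ 1, λ a weighting, and f ∈ 𝔽_p[x₁,…,xₙ] a nonzero polynomial with f = init_λ(f) (i.e. all exponent vectors of f have the same λ-weight). Suppose c ∈ 𝔽_p satisfies c·Tr(f^{p−1}) = 1, so that φ := (g ↦ c·Tr(f^{p−1}·g)) is a Frobenius splitting of 𝔽_p[x₁,…,xₙ]. Then every ideal I compatibly split by φ satisfies I = init_λ(I); equivalently, I is homogeneous for the grading in which the variable xᵢ has degree λᵢ. -/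
open MvPolynomial

open Classical in
theorem aux_wt {n : ℕ} (lam : Fin n → ℕ) (m : Fin n →₀ ℕ) :
    Finsupp.weight lam m = wtOf lam m := by
  rw [Finsupp.weight_apply, Finsupp.sum_fintype _ _ (by simp)]
  simp [wtOf, mul_comm]

theorem aux_coeff_comp {R : Type*} [CommRing R] {n : ℕ} (lam : Fin n → ℕ) (w : ℕ)
    (g : MvPolynomial (Fin n) R) (m : Fin n →₀ ℕ) :
    coeff m (weightedHomogeneousComponent lam w g) =
      if wtOf lam m = w then coeff m g else 0 := by
  classical
  rw [coeff_weightedHomogeneousComponent, aux_wt]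

theorem aux_coeff_init {R : Type*} [CommRing R] {n : ℕ} (lam : Fin n → ℕ)
    (g : MvPolynomial (Fin n) R) (m : Fin n →₀ ℕ) :
    coeff m (initForm lam g) =
      open Classical in
      if (∀ m' ∈ g.support, wtOf lam m' ≤ wtOf lam m) then coeff m g else 0 := by
  classical
  unfold initForm
  rw [coeff_sum]
  simp only [coeff_monomial]
  rw [Finset.sum_ite_eq']
  by_cases h : coeff m g = 0 <;> simp [h]

theorem aux_init_of_hom {R : Type*} [CommRing R] {n : ℕ} (lam : Fin n → ℕ) (w : ℕ)
    (g : MvPolynomial (Fin n) R) (hg : ∀ m, coeff m g ≠ 0 → wtOf lam m = w) :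
    initForm lam g = g := by
  classical
  ext m
  rw [aux_coeff_init]
  split_ifs with h
  · rfl
  · by_contra h0
    apply h
    intro m' hm'
    rw [hg m' (mem_support_iff.1 hm'), hg m (Ne.symm h0)]

theorem aux_init_eq_comp {R : Type*} [CommRing R] {n : ℕ} (lam : Fin n → ℕ)
    (g : MvPolynomial (Fin n) R) :
    ∃ w, initForm lam g = weightedHomogeneousComponent lam w g := by
  classical
  by_cases h : g = 0
  · exact ⟨0, by subst h; simp [initForm]⟩
  obtain ⟨m₀, hm₀, hmax⟩ := Finset.exists_max_image g.support (wtOf lam)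
    (support_nonempty.2 h)
  refine ⟨wtOf lam m₀, ?_⟩
  ext m
  rw [aux_coeff_init, aux_coeff_comp]
  by_cases hm : coeff m g = 0
  · simp [hm]
  · have hm' := mem_support_iff.2 hm
    congr 1
    apply propext
    constructor
    · intro h1
      exact le_antisymm (hmax m hm') (h1 m₀ hm₀)
    · intro h1
      rw [h1]; exact hmax

/-- the exponent `p m + (p-1)` -/
noncomputable def auxExp (p : ℕ) {n : ℕ} (m : Fin n →₀ ℕ) : Fin n →₀ ℕ :=
  Finsupp.equivFunOnFinite.symm fun i => p * m i + (p - 1)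

theorem aux_coeff_Tr {p : ℕ} (hp : p.Prime) {n : ℕ} (g : MvPolynomial (Fin n) (ZMod p))
    (m : Fin n →₀ ℕ) : coeff m (Tr p n g) = coeff (auxExp p m) g := by
  classical
  have hpos := hp.pos
  unfold Tr
  rw [coeff_sum]
  rw [Finset.sum_eq_single (auxExp p m)]
  · have h1 : ∀ i, auxExp p m i + 1 = p * (m i + 1) := by
      intro i; simp only [auxExp, Finsupp.equivFunOnFinite_symm_apply_apply]; rw [mul_add]; omega
    rw [if_pos (fun i => by rw [h1]; exact dvd_mul_right _ _), coeff_monomial, if_pos]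
    ext i
    rw [Finsupp.equivFunOnFinite_symm_apply_apply, h1, Nat.mul_div_cancel_left _ hpos]
    rfl
  · intro b _ hb
    split_ifs with h
    · rw [coeff_monomial, if_neg]
      rintro rfl
      apply hb
      ext i
      simp only [auxExp, Finsupp.equivFunOnFinite_symm_apply_apply]
      obtain ⟨k, hk⟩ := h i
      rw [hk, Nat.mul_div_cancel_left _ hpos]
      rcases k with _ | k
      · omega
      · rw [Nat.add_sub_cancel]; rw [mul_add] at hk; omega
    · simp
  · intro h
    split_ifs
    · rw [notMem_support_iff.1 h]; simp
    · simp

theorem aux_Tr_add {p : ℕ} (hp : p.Prime) {n : ℕ} (g h : MvPolynomial (Fin n) (ZMod p)) :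
    Tr p n (g + h) = Tr p n g + Tr p n h := by
  ext m; simp [aux_coeff_Tr hp]

theorem aux_Tr_pow {p : ℕ} (hp : p.Prime) {n : ℕ} (a b : MvPolynomial (Fin n) (ZMod p)) :
    Tr p n (a ^ p * b) = a * Tr p n b := by
  classical
  have : Fact p.Prime := ⟨hp⟩
  have hpos := hp.pos
  induction a using MvPolynomial.induction_on' with
  | add a a' h h' => rw [add_pow_char, add_mul, aux_Tr_add hp, h, h', add_mul]
  | monomial k u =>
    ext m
    rw [aux_coeff_Tr hp, monomial_pow, ZMod.pow_card, coeff_monomial_mul', coeff_monomial_mul',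
      aux_coeff_Tr hp]
    have key : (p • k ≤ auxExp p m) ↔ k ≤ m := by
      rw [Finsupp.le_def, Finsupp.le_def]
      refine forall_congr' fun i => ?_
      simp only [auxExp, Finsupp.equivFunOnFinite_symm_apply_apply, Finsupp.smul_apply, smul_eq_mul]
      constructor
      · intro h
        by_contra hlt
        have : p * (m i + 1) ≤ p * k i := Nat.mul_le_mul_left _ (by omega)
        rw [mul_add] at this; omega
      · intro h
        have : p * k i ≤ p * m i := Nat.mul_le_mul_left _ h
        omega
    by_cases hk : k ≤ m
    · rw [if_pos (key.2 hk), if_pos hk]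
      congr 2
      ext i
      have hki := hk i
      have : p * k i ≤ p * m i := Nat.mul_le_mul_left _ hki
      simp only [auxExp, Finsupp.equivFunOnFinite_symm_apply_apply, Finsupp.smul_apply, smul_eq_mul,
        Finsupp.tsub_apply]
      rw [Nat.mul_sub]; omega
    · rw [if_neg (fun h => hk (key.1 h)), if_neg hk]

theorem aux_wt_add {n : ℕ} (lam : Fin n → ℕ) (m m' : Fin n →₀ ℕ) :
    wtOf lam (m + m') = wtOf lam m + wtOf lam m' := by
  simp [wtOf, mul_add, Finset.sum_add_distrib]

theorem aux_wt_exp (p : ℕ) {n : ℕ} (lam : Fin n → ℕ) (m : Fin n →₀ ℕ) :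
    wtOf lam (auxExp p m) = p * wtOf lam m + (p - 1) * ∑ i, lam i := by
  simp only [wtOf, auxExp, Finsupp.equivFunOnFinite_symm_apply_apply, Finset.mul_sum]
  rw [← Finset.sum_add_distrib]
  exact Finset.sum_congr rfl fun i _ => by ring

theorem aux_hom_pow {R : Type*} [CommRing R] {n : ℕ} (lam : Fin n → ℕ) (w k : ℕ)
    (g : MvPolynomial (Fin n) R) (hg : ∀ m, coeff m g ≠ 0 → wtOf lam m = w) (m : Fin n →₀ ℕ)
    (hm : coeff m (g ^ k) ≠ 0) : wtOf lam m = k * w := by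
  have h : IsWeightedHomogeneous lam g w := fun {d} hd => by rw [aux_wt]; exact hg d hd
  have h2 := h.pow k
  rw [← aux_wt, h2 hm, smul_eq_mul]

theorem aux_main {p : ℕ} (hp : p.Prime) {n : ℕ} (lam : Fin n → ℕ)
    (f : MvPolynomial (Fin n) (ZMod p)) (hinit : f = initForm lam f)
    (c : ZMod p) (hc : C c * Tr p n (f ^ (p - 1)) = 1)
    (I : Ideal (MvPolynomial (Fin n) (ZMod p)))
    (hI : ∀ g ∈ I, C c * Tr p n (f ^ (p - 1) * g) ∈ I)
    (a : MvPolynomial (Fin n) (ZMod p)) (ha : a ∈ I) (w : ℕ) :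
    weightedHomogeneousComponent lam w a ∈ I := by
  classical
  have hp1 : 1 < p := hp.one_lt
  set φ : MvPolynomial (Fin n) (ZMod p) → MvPolynomial (Fin n) (ZMod p) :=
    fun g => C c * Tr p n (f ^ (p - 1) * g) with hφ
  -- weight of f
  obtain ⟨d, hd⟩ := aux_init_eq_comp lam f
  have hfd : ∀ m, coeff m f ≠ 0 → wtOf lam m = d := by
    intro m hm
    rw [hinit, hd, aux_coeff_comp] at hm
    by_contra h
    simp [h] at hm
  have hFd := aux_hom_pow lam d (p - 1) f hfd
  have hF : (p - 1) * d = (p - 1) * ∑ i, lam i := by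
    have h0 : coeff 0 (C c * Tr p n (f ^ (p - 1))) ≠ 0 := by
      have : Fact p.Prime := ⟨hp⟩
      rw [hc]; simp
    rw [coeff_C_mul, aux_coeff_Tr hp] at h0
    have := hFd _ (right_ne_zero_of_mul h0)
    rw [aux_wt_exp] at this
    simpa [wtOf] using this.symm
  have hadd : ∀ g h, φ (g + h) = φ g + φ h := by
    intro g h; simp only [hφ, mul_add, aux_Tr_add hp]
  have hone : ∀ g, φ (g ^ p) = g := by
    intro g
    simp only [hφ]
    rw [mul_comm (f ^ (p - 1)), aux_Tr_pow hp, mul_left_comm, hc, mul_one]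
  have hwt : ∀ h m, coeff m (φ h) ≠ 0 → ∃ l, coeff l h ≠ 0 ∧ wtOf lam l = p * wtOf lam m := by
    intro h m hm
    simp only [hφ] at hm
    rw [coeff_C_mul, aux_coeff_Tr hp] at hm
    have hm := right_ne_zero_of_mul hm
    rw [coeff_mul] at hm
    obtain ⟨⟨k, l⟩, hkl, hne⟩ := Finset.exists_ne_zero_of_sum_ne_zero hm
    refine ⟨l, right_ne_zero_of_mul hne, ?_⟩
    have h1 := hFd k (left_ne_zero_of_mul hne)
    have h2 := congrArg (wtOf lam) (Finset.HasAntidiagonal.mem_antidiagonal.1 hkl)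
    simp only [aux_wt_add, aux_wt_exp] at h2
    omega
  have hadd' : ∀ e g h, φ^[e] (g + h) = φ^[e] g + φ^[e] h := by
    intro e
    induction e with
    | zero => intro g h; rfl
    | succ e ih => intro g h; simp only [Function.iterate_succ_apply, hadd, ih]
  have hone' : ∀ e g, φ^[e] (g ^ p ^ e) = g := by
    intro e
    induction e with
    | zero => intro g; simp
    | succ e ih => intro g; rw [Function.iterate_succ_apply, pow_succ, pow_mul, hone, ih]
  have hwt' : ∀ e h m, coeff m (φ^[e] h) ≠ 0 →
      ∃ l, coeff l h ≠ 0 ∧ wtOf lam l = p ^ e * wtOf lam m := by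
    intro e
    induction e with
    | zero => intro h m hm; exact ⟨m, hm, by simp⟩
    | succ e ih =>
      intro h m hm
      rw [Function.iterate_succ_apply] at hm
      obtain ⟨l, hl, hl2⟩ := ih _ _ hm
      obtain ⟨l', hl', hl2'⟩ := hwt _ _ hl
      exact ⟨l', hl', by rw [hl2', hl2]; ring⟩
  have hI' : ∀ e, ∀ g ∈ I, φ^[e] g ∈ I := by
    intro e
    induction e with
    | zero => intro g hg; exact hg
    | succ e ih => intro g hg; rw [Function.iterate_succ_apply]; exact ih _ (hI g hg)
  set b := weightedHomogeneousComponent lam w a with hb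
  set e := a.support.sup (wtOf lam) + w + 1 with he
  have hq : e < p ^ e := Nat.lt_pow_self hp1
  set q := p ^ e with hqdef
  have hmem : φ^[e] (a * b ^ (q - 1)) ∈ I := hI' e _ (I.mul_mem_right _ ha)
  have hsplit : a * b ^ (q - 1) = b ^ q + (a - b) * b ^ (q - 1) := by
    have : b ^ q = b * b ^ (q - 1) := by rw [← pow_succ']; congr 1; omega
    rw [this]; ring
  have hz : φ^[e] ((a - b) * b ^ (q - 1)) = 0 := by
    ext m
    rw [coeff_zero]
    by_contra hm
    obtain ⟨l, hl, hl2⟩ := hwt' _ _ _ hm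
    rw [coeff_mul] at hl
    obtain ⟨⟨k, j⟩, hkj, hne⟩ := Finset.exists_ne_zero_of_sum_ne_zero hl
    have hk := left_ne_zero_of_mul hne
    have hj := right_ne_zero_of_mul hne
    have hbw : ∀ m, coeff m b ≠ 0 → wtOf lam m = w := by
      intro m hm
      rw [hb, aux_coeff_comp] at hm
      by_contra h
      simp [h] at hm
    have hjw := aux_hom_pow lam w (q - 1) b hbw j hj
    simp only [coeff_sub] at hk
    rw [hb, aux_coeff_comp] at hk
    have hkw : wtOf lam k ≠ w := by
      intro h; simp [h] at hk
    rw [if_neg hkw, sub_zero] at hk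
    have hkq : wtOf lam k ≤ a.support.sup (wtOf lam) :=
      Finset.le_sup (mem_support_iff.2 hk)
    have h2 := congrArg (wtOf lam) (Finset.HasAntidiagonal.mem_antidiagonal.1 hkj)
    simp only [aux_wt_add] at h2
    rw [hl2, hjw, ← hqdef] at h2
    have h3 : wtOf lam k + q * w = q * wtOf lam m + w := by
      rw [← h2, Nat.sub_mul, one_mul]
      have : w ≤ q * w := Nat.le_mul_of_pos_left _ (by omega)
      omega
    apply hkw
    have h4 := congrArg (· % q) h3
    simp only [Nat.add_mul_mod_self_left, Nat.mul_add_mod] at h4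
    rwa [Nat.mod_eq_of_lt (by omega), Nat.mod_eq_of_lt (by omega)] at h4
  rw [hsplit, hadd', hz, add_zero, hone'] at hmem
  exact hmem

theorem stmt_16 {p : ℕ} (hp : p.Prime) {n : ℕ} (hn : 1 ≤ n) (lam : Fin n → ℕ)
    (f : MvPolynomial (Fin n) (ZMod p)) (hf : f ≠ 0) (hinit : f = initForm lam f)
    (c : ZMod p) (hc : C c * Tr p n (f ^ (p - 1)) = 1)
    (I : Ideal (MvPolynomial (Fin n) (ZMod p)))
    (hI : ∀ g ∈ I, C c * Tr p n (f ^ (p - 1) * g) ∈ I) :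
    I = initIdeal lam I := by
  classical
  have key := aux_main hp lam f hinit c hc I hI
  apply le_antisymm
  · intro a ha
    rw [← sum_weightedHomogeneousComponent lam a]
    refine finsum_induction (· ∈ initIdeal lam I) (Ideal.zero_mem _)
      (fun x y hx hy => Ideal.add_mem _ hx hy) ?_
    intro w
    by_cases h0 : weightedHomogeneousComponent lam w a = 0
    · rw [h0]; exact Ideal.zero_mem _
    · refine Ideal.subset_span ⟨_, key a ha w, h0, aux_init_of_hom lam w _ ?_⟩
      intro m hm
      rw [aux_coeff_comp] at hm
      by_contra h
      simp [h] at hm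
  · refine Ideal.span_le.2 ?_
    rintro h ⟨g, hg, _, rfl⟩
    obtain ⟨w, hw⟩ := aux_init_eq_comp lam g
    rw [hw]
    exact key g hg w
end
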